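/- Suppose there exist bounded linear operators T_q : V₂ → V₁ and T_{q+1} : V₃ → V₂ such that T_q maps into Dom T ∩ V₁ with T(T_q f) = f for every f ∈ T(Dom T ∩ V₁), and T_{q+1} maps into Dom T ∩ V₂ with T(T_{q+1} g) = g for every g ∈ T(Dom T ∩ V₂). Let Π₁ : V₂ → V₂ be the orthogonal projection onto T(Dom T ∩ V₁), Π₂ : V₃ → V₃ the orthogonal projection onto T(Dom T ∩ V₂), Pr₁ : V₁ → V₁ the orthogonal projection onto (ker T ∩ V₁)ᗮ ∩ V₁, and Pr₂ : V₂ → V₂ the orthogonal projection onto (ker T ∩ V₂)ᗮ ∩ V₂, and set K_q = Pr₁ ∘ T_q ∘ Π₁ and K_{q+1} = Pr₂ ∘ T_{q+1} ∘ Π₂. Then the Green operator satisfies N = K_q* K_q + K_{q+1} K_{q+1}*; in particular, if T_q and T_{q+1} are compact, then N is compact. -/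

import Mathlib

open scoped LinearPMap

/-- `T'` is the restriction of the partially defined operator `T` to the subspaces `V` (source)
and `W` (target): the domain of `T'` consists exactly of the elements of `V` lying in the domain
of `T`, and the values of `T'` agree with those of `T` (in particular `T` maps `Dom T ∩ V`
into `W`). -/
def IsRestrictionOf {R E : Type*} [Ring R] [AddCommGroup E] [Module R E]
    (T : E →ₗ.[R] E) (V W : Submodule R E) (T' : ↥V →ₗ.[R] ↥W) : Prop :=
  (∀ u : V, u ∈ T'.domain ↔ (u : E) ∈ T.domain) ∧
  ∀ (u : V) (hu : u ∈ T'.domain) (hu' : (u : E) ∈ T.domain),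
    ((T' ⟨u, hu⟩ : W) : E) = T ⟨(u : E), hu'⟩

/-!
The operators `K = K_q` and `L = K_{q+1}` are the Moore-Penrose inverses of `A = T|_{V₁}` and
`B = T|_{V₂}`. For `w ⊥ ker A` one has `A* K* w = w`, and `K*` takes values in `R(A) ⊆ ker B`, so
for `f ∈ R(A)` the Laplacian `A A* + B* B` sends `K* K f` to `A A* K* K f = A K f = f`. In the
same way it sends `L L* b` to `b` whenever `b ⊥ ker B`. Hence `K* K + L L*` inverts the Laplacian
on each of the first two summands of the Hodge decomposition
`R(A) ⊕ (ker B)ᗮ ⊕ (ker B ∩ R(A)ᗮ)`, and it vanishes on the third. The decomposition is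
available on the dense subspace `Dom B`, which suffices because both sides are bounded.
-/

section Kernel

variable {R E F : Type*} [Ring R] [AddCommGroup E] [Module R E] [AddCommGroup F] [Module R F]

/-- The kernel `{u ∈ Dom A : A u = 0}` of a partially defined operator, as a submodule of the
ambient space instead of the domain. -/
abbrev partialKer (A : E →ₗ.[R] F) : Submodule R E :=
  (LinearMap.ker A.toFun).map A.domain.subtype

variable {A : E →ₗ.[R] F}

theorem mem_partialKer_iff {u : E} : u ∈ partialKer A ↔ (u, 0) ∈ A.graph := by
  simp [LinearPMap.mem_graph_iff, and_comm]

theorem mem_range_toFun_iff {f : F} : f ∈ LinearMap.range A.toFun ↔ ∃ u, (u, f) ∈ A.graph :=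
  LinearPMap.mem_range_iff

end Kernel

namespace IsRestrictionOf

variable {R E : Type*} [Ring R] [AddCommGroup E] [Module R E] {T : E →ₗ.[R] E}
  {U V W : Submodule R E} {A : U →ₗ.[R] V} {B : V →ₗ.[R] W}

theorem mem_graph_iff (hA : IsRestrictionOf T U V A) {u : U} {v : V} :
    (u, v) ∈ A.graph ↔ ((u : E), (v : E)) ∈ T.graph := by
  constructor
  · intro h
    have hu := LinearPMap.mem_domain_of_mem_graph h
    rw [← LinearPMap.image_iff hu] at h
    rw [← LinearPMap.image_iff ((hA.1 u).1 hu), h, hA.2 u hu]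
  · intro h
    have hu := LinearPMap.mem_domain_of_mem_graph h
    rw [← LinearPMap.image_iff hu] at h
    rw [← LinearPMap.image_iff ((hA.1 u).2 hu)]
    exact Subtype.ext (h.trans (hA.2 u _ hu).symm)

theorem exists_mem_graph (hA : IsRestrictionOf T U V A) {u : U} {x : E}
    (h : ((u : E), x) ∈ T.graph) : ∃ v : V, (v : E) = x ∧ (u, v) ∈ A.graph := by
  have hu := (hA.1 u).2 (LinearPMap.mem_domain_of_mem_graph h)
  have hAu := A.mem_graph ⟨u, hu⟩
  exact ⟨A ⟨u, hu⟩, LinearPMap.mem_graph_snd_inj T (hA.mem_graph_iff.1 hAu) h rfl, hAu⟩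

theorem range_le_partialKer (hA : IsRestrictionOf T U V A) (hB : IsRestrictionOf T V W B)
    (hT : LinearMap.range T.toFun ≤ partialKer T) : LinearMap.range A.toFun ≤ partialKer B := by
  intro v hv
  obtain ⟨u, huv⟩ := mem_range_toFun_iff.1 hv
  have hTv := hT (mem_range_toFun_iff.2 ⟨_, hA.mem_graph_iff.1 huv⟩)
  exact mem_partialKer_iff.2 (hB.mem_graph_iff.2 (mem_partialKer_iff.1 hTv))

end IsRestrictionOf

section Hilbert

variable {𝕜 E F G : Type*} [RCLike 𝕜]
  [NormedAddCommGroup E] [InnerProductSpace 𝕜 E]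
  [NormedAddCommGroup F] [InnerProductSpace 𝕜 F]
  [NormedAddCommGroup G] [InnerProductSpace 𝕜 G]
  {A : E →ₗ.[𝕜] F} {B : F →ₗ.[𝕜] G} {Q : F →ₗ.[𝕜] F}

open scoped InnerProductSpace

theorem eq_of_mem_of_sub_mem_orthogonal {V : Submodule 𝕜 F} {u v : F}
    (hu : u ∈ V) (hv : v ∈ V) (h : u - v ∈ Vᗮ) : u = v :=
  sub_eq_zero.1 <| Submodule.disjoint_def.1 V.orthogonal_disjoint _ (V.sub_mem hu hv) h

section Adjoint

variable [CompleteSpace E]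

theorem mem_graph_adjoint_iff (hA : Dense (A.domain : Set E)) {v : F} {w : E} :
    (v, w) ∈ A†.graph ↔ ∀ x f, (x, f) ∈ A.graph → ⟪w, x⟫_𝕜 = ⟪v, f⟫_𝕜 := by
  simp only [LinearPMap.adjoint_graph_eq_graph_adjoint hA, Submodule.mem_adjoint_iff, sub_eq_zero]
  refine forall₃_congr fun x f _ => ?_
  rw [← inner_conj_symm w, ← inner_conj_symm v, (starRingEnd 𝕜).injective.eq_iff, eq_comm]

theorem inner_right_of_mem_graph_adjoint (hA : Dense (A.domain : Set E)) {v : F} {w x : E} {f : F}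
    (hvw : (v, w) ∈ A†.graph) (hxf : (x, f) ∈ A.graph) : ⟪x, w⟫_𝕜 = ⟪f, v⟫_𝕜 := by
  rw [← inner_conj_symm x, ← inner_conj_symm f, (mem_graph_adjoint_iff hA).1 hvw x f hxf]

theorem mem_graph_adjoint_zero_of_mem_orthogonal (hA : Dense (A.domain : Set E)) {v : F}
    (hv : v ∈ (LinearMap.range A.toFun)ᗮ) : (v, 0) ∈ A†.graph := by
  refine (mem_graph_adjoint_iff hA).2 fun x f hxf => ?_
  rw [inner_zero_left,
    Submodule.inner_left_of_mem_orthogonal (mem_range_toFun_iff.2 ⟨x, hxf⟩) hv]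

end Adjoint

/-- `K` is the Moore-Penrose inverse of the partially defined operator `A`: it is bounded,
everywhere defined, takes values in `Dom A ∩ (ker A)ᗮ`, and `A K` is the orthogonal projection
onto the range of `A`. -/
structure IsMoorePenroseInverse (A : E →ₗ.[𝕜] F) (K : F →L[𝕜] E) : Prop where
  exists_mem_graph : ∀ u, ∃ f, (K u, f) ∈ A.graph ∧ u - f ∈ (LinearMap.range A.toFun)ᗮ
  mem_orthogonal_ker : ∀ u, K u ∈ (partialKer A)ᗮ

theorem isMoorePenroseInverse_comp {S : F →L[𝕜] E} {p : F →L[𝕜] F} {r : E →L[𝕜] E}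
    (hS : ∀ f ∈ LinearMap.range A.toFun, (S f, f) ∈ A.graph)
    (hp : ∀ u, p u ∈ LinearMap.range A.toFun ∧ u - p u ∈ (LinearMap.range A.toFun)ᗮ)
    (hr : ∀ u, r u ∈ (partialKer A)ᗮ ∧ u - r u ∈ partialKer A) :
    IsMoorePenroseInverse A (r.comp (S.comp p)) where
  exists_mem_graph u := by
    have hSp := A.graph.sub_mem (hS _ (hp u).1) (mem_partialKer_iff.1 (hr (S (p u))).2)
    rw [Prod.mk_sub_mk, sub_sub_cancel, sub_zero] at hSp
    exact ⟨p u, hSp, (hp u).2⟩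
  mem_orthogonal_ker _ := (hr _).1

namespace IsMoorePenroseInverse

variable {K : F →L[𝕜] E}

theorem mem_graph_of_mem_range (hK : IsMoorePenroseInverse A K) {f : F}
    (hf : f ∈ LinearMap.range A.toFun) : (K f, f) ∈ A.graph := by
  obtain ⟨g, hKf, hfg⟩ := hK.exists_mem_graph f
  rwa [← eq_of_mem_of_sub_mem_orthogonal hf (mem_range_toFun_iff.2 ⟨_, hKf⟩) hfg] at hKf

theorem sub_apply_mem_ker (hK : IsMoorePenroseInverse A K) {u : E} {f : F}
    (h : (u, f) ∈ A.graph) : u - K f ∈ partialKer A := by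
  have hsub := A.graph.sub_mem h (hK.mem_graph_of_mem_range (mem_range_toFun_iff.2 ⟨u, h⟩))
  rw [Prod.mk_sub_mk, sub_self] at hsub
  exact mem_partialKer_iff.2 hsub

theorem apply_eq_zero_of_mem_orthogonal (hK : IsMoorePenroseInverse A K) {u : F}
    (hu : u ∈ (LinearMap.range A.toFun)ᗮ) : K u = 0 := by
  obtain ⟨f, hKu, huf⟩ := hK.exists_mem_graph u
  have hf : f = 0 := by
    have hfo : f - 0 ∈ (LinearMap.range A.toFun)ᗮ := by simpa using Submodule.sub_mem _ hu huf
    exact eq_of_mem_of_sub_mem_orthogonal (mem_range_toFun_iff.2 ⟨_, hKu⟩) (zero_mem _) hfo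
  rw [hf] at hKu
  exact Submodule.disjoint_def.1 (partialKer A).orthogonal_disjoint _
    (mem_partialKer_iff.2 hKu) (hK.mem_orthogonal_ker u)

variable [CompleteSpace E] [CompleteSpace F]

theorem adjoint_apply_mem_range (hK : IsMoorePenroseInverse A K) (w : E) :
    K.adjoint w ∈ LinearMap.range A.toFun := by
  obtain ⟨f, hf, hsub⟩ := hK.exists_mem_graph (K.adjoint w)
  have hfr := mem_range_toFun_iff.2 ⟨_, hf⟩
  have hinner : ⟪K.adjoint w - f, K.adjoint w - f⟫_𝕜 = 0 := by
    nth_rw 1 [inner_sub_left]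
    rw [K.adjoint_inner_left, hK.apply_eq_zero_of_mem_orthogonal hsub, inner_zero_right,
      Submodule.inner_right_of_mem_orthogonal hfr hsub, sub_zero]
  rwa [sub_eq_zero.1 (inner_self_eq_zero.1 hinner)]

theorem adjoint_apply_eq_zero_of_mem_ker (hK : IsMoorePenroseInverse A K) {u : E}
    (hu : u ∈ partialKer A) : K.adjoint u = 0 := by
  refine ext_inner_right 𝕜 fun v => ?_
  rw [K.adjoint_inner_left, inner_zero_left,
    Submodule.inner_right_of_mem_orthogonal hu (hK.mem_orthogonal_ker v)]

theorem adjoint_apply_mem_graph_adjoint (hK : IsMoorePenroseInverse A K)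
    (hA : Dense (A.domain : Set E)) {w : E} (hw : w ∈ (partialKer A)ᗮ) :
    (K.adjoint w, w) ∈ A†.graph := by
  refine (mem_graph_adjoint_iff hA).2 fun x f hxf => ?_
  rw [K.adjoint_inner_left, ← sub_eq_zero, ← inner_sub_right]
  exact Submodule.inner_left_of_mem_orthogonal (hK.sub_apply_mem_ker hxf) hw

end IsMoorePenroseInverse

/-- `N` is the Green operator of `Q`: it vanishes on `ker Q`, and for `u` in the range `R(Q)` the
vector `N u` is a solution `v ∈ Dom Q ∩ R(Q)` of `Q v = u`. -/
structure IsGreenOperator (Q : F →ₗ.[𝕜] F) (N : F → F) : Prop where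
  apply_of_mem_ker : ∀ u ∈ partialKer Q, N u = 0
  mem_graph : ∀ u ∈ LinearMap.range Q.toFun, (N u, u) ∈ Q.graph
  mem_range : ∀ u ∈ LinearMap.range Q.toFun, N u ∈ LinearMap.range Q.toFun

theorem range_le_orthogonal_ker (hQ : Q.IsFormalAdjoint Q) :
    LinearMap.range Q.toFun ≤ (partialKer Q)ᗮ := by
  rintro _ ⟨x, rfl⟩
  rw [Submodule.mem_orthogonal']
  rintro _ ⟨y, hy, rfl⟩
  have hQy : Q y = 0 := hy
  exact (hQ x y).trans (by rw [hQy, inner_zero_right])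

theorem IsGreenOperator.apply_eq {N : F → F} (hN : IsGreenOperator Q N)
    (hQ : Q.IsFormalAdjoint Q) {u v : F} (huv : (v, u) ∈ Q.graph)
    (hv : v ∈ LinearMap.range Q.toFun) : N u = v := by
  have hu := mem_range_toFun_iff.2 ⟨v, huv⟩
  have hker := Q.graph.sub_mem (hN.mem_graph u hu) huv
  rw [Prod.mk_sub_mk, sub_self, ← mem_partialKer_iff] at hker
  have hrange := Submodule.sub_mem _ (hN.mem_range u hu) hv
  exact sub_eq_zero.1 <| Submodule.disjoint_def.1 (partialKer Q).orthogonal_disjoint _ hker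
    (range_le_orthogonal_ker hQ hrange)

theorem exists_hodge_decomposition (hAB : LinearMap.range A.toFun ≤ partialKer B)
    {K : F →L[𝕜] E} (hK : IsMoorePenroseInverse A K)
    {L : G →L[𝕜] F} (hL : IsMoorePenroseInverse B L) {u : F} (hu : u ∈ B.domain) :
    ∃ f ∈ LinearMap.range A.toFun, ∃ b ∈ (partialKer B)ᗮ,
      ∃ h ∈ partialKer B ⊓ (LinearMap.range A.toFun)ᗮ, u = f + b + h := by
  obtain ⟨g, hug⟩ := LinearPMap.mem_domain_iff.1 hu
  obtain ⟨f, hKu, huf⟩ := hK.exists_mem_graph u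
  have hf := mem_range_toFun_iff.2 ⟨_, hKu⟩
  have hLg := hL.mem_orthogonal_ker g
  refine ⟨f, hf, L g, hLg, u - f - L g, ⟨?_, ?_⟩, by abel⟩
  · rw [sub_right_comm]
    exact Submodule.sub_mem _ (hL.sub_apply_mem_ker hug) (hAB hf)
  · exact Submodule.sub_mem _ huf (Submodule.orthogonal_le hAB hLg)

section Laplacian

variable [CompleteSpace E] [CompleteSpace F]

/-- `Q` is the Hodge Laplacian `A A* + B* B` with its natural domain. -/
def IsHodgeLaplacian (A : E →ₗ.[𝕜] F) (B : F →ₗ.[𝕜] G) (Q : F →ₗ.[𝕜] F) : Prop :=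
  ∀ u f, (u, f) ∈ Q.graph ↔ ∃ w a v b, (u, w) ∈ A†.graph ∧ (w, a) ∈ A.graph ∧
    (u, v) ∈ B.graph ∧ (v, b) ∈ B†.graph ∧ f = a + b

namespace IsHodgeLaplacian

theorem isFormalAdjoint (hQ : IsHodgeLaplacian A B Q) (hA : Dense (A.domain : Set E))
    (hB : Dense (B.domain : Set F)) : Q.IsFormalAdjoint Q := by
  intro x y
  obtain ⟨w, a, v, b, hw, ha, hv, hb, hx⟩ := (hQ _ _).1 (Q.mem_graph x)
  obtain ⟨w', a', v', b', hw', ha', hv', hb', hy⟩ := (hQ _ _).1 (Q.mem_graph y)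
  calc ⟪Q x, (y : F)⟫_𝕜 = ⟪a, (y : F)⟫_𝕜 + ⟪b, (y : F)⟫_𝕜 := by rw [hx, inner_add_left]
    _ = ⟪w, w'⟫_𝕜 + ⟪v, v'⟫_𝕜 := by
      rw [inner_right_of_mem_graph_adjoint hA hw' ha, (mem_graph_adjoint_iff hB).1 hb _ _ hv']
    _ = ⟪(x : F), a'⟫_𝕜 + ⟪(x : F), b'⟫_𝕜 := by
      rw [(mem_graph_adjoint_iff hA).1 hw _ _ ha', inner_right_of_mem_graph_adjoint hB hb' hv]
    _ = ⟪(x : F), Q y⟫_𝕜 := by rw [hy, inner_add_right]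

theorem mem_ker (hQ : IsHodgeLaplacian A B Q) (hA : Dense (A.domain : Set E)) {u : F}
    (hker : u ∈ partialKer B) (hrange : u ∈ (LinearMap.range A.toFun)ᗮ) : u ∈ partialKer Q :=
  mem_partialKer_iff.2 <| (hQ _ _).2
    ⟨0, 0, 0, 0, mem_graph_adjoint_zero_of_mem_orthogonal hA hrange, A.graph.zero_mem,
      mem_partialKer_iff.1 hker, B†.graph.zero_mem, (add_zero 0).symm⟩

theorem adjoint_apply_apply_mem_graph (hQ : IsHodgeLaplacian A B Q)
    (hA : Dense (A.domain : Set E)) (hAB : LinearMap.range A.toFun ≤ partialKer B)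
    {K : F →L[𝕜] E} (hK : IsMoorePenroseInverse A K) {f : F}
    (hf : f ∈ LinearMap.range A.toFun) : (K.adjoint (K f), f) ∈ Q.graph :=
  (hQ _ _).2 ⟨K f, f, 0, 0, hK.adjoint_apply_mem_graph_adjoint hA (hK.mem_orthogonal_ker f),
    hK.mem_graph_of_mem_range hf, mem_partialKer_iff.1 (hAB (hK.adjoint_apply_mem_range _)),
    B†.graph.zero_mem, (add_zero f).symm⟩

theorem apply_adjoint_apply_mem_graph [CompleteSpace G] (hQ : IsHodgeLaplacian A B Q)
    (hA : Dense (A.domain : Set E)) (hB : Dense (B.domain : Set F))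
    (hAB : LinearMap.range A.toFun ≤ partialKer B)
    {L : G →L[𝕜] F} (hL : IsMoorePenroseInverse B L) {f : F}
    (hf : f ∈ (partialKer B)ᗮ) : (L (L.adjoint f), f) ∈ Q.graph :=
  have hLf : L (L.adjoint f) ∈ (LinearMap.range A.toFun)ᗮ :=
    Submodule.orthogonal_le hAB (hL.mem_orthogonal_ker _)
  (hQ _ _).2 ⟨0, 0, L.adjoint f, f, mem_graph_adjoint_zero_of_mem_orthogonal hA hLf,
    A.graph.zero_mem, hL.mem_graph_of_mem_range (hL.adjoint_apply_mem_range f),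
    hL.adjoint_apply_mem_graph_adjoint hB hf, (zero_add f).symm⟩

end IsHodgeLaplacian

theorem IsGreenOperator.eq_adjoint_comp_self_add_self_comp_adjoint [CompleteSpace G]
    (hA : Dense (A.domain : Set E)) (hB : Dense (B.domain : Set F))
    (hAB : LinearMap.range A.toFun ≤ partialKer B) (hQ : IsHodgeLaplacian A B Q)
    {N : F →L[𝕜] F} (hN : IsGreenOperator Q N)
    {K : F →L[𝕜] E} (hK : IsMoorePenroseInverse A K)
    {L : G →L[𝕜] F} (hL : IsMoorePenroseInverse B L) :
    N = K.adjoint.comp K + L.comp L.adjoint := by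
  have hQs := hQ.isFormalAdjoint hA hB
  refine ContinuousLinearMap.ext_on (hB.mono Submodule.subset_span) fun u hu => ?_
  obtain ⟨f, hf, b, hb, h, ⟨hhB, hhA⟩, rfl⟩ := exists_hodge_decomposition hAB hK hL hu
  have hNf : N f = K.adjoint (K f) :=
    hN.apply_eq hQs (hQ.adjoint_apply_apply_mem_graph hA hAB hK hf) <| mem_range_toFun_iff.2
      ⟨_, hQ.adjoint_apply_apply_mem_graph hA hAB hK (hK.adjoint_apply_mem_range _)⟩
  have hNb : N b = L (L.adjoint b) :=
    hN.apply_eq hQs (hQ.apply_adjoint_apply_mem_graph hA hB hAB hL hb) <| mem_range_toFun_iff.2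
      ⟨_, hQ.apply_adjoint_apply_mem_graph hA hB hAB hL (hL.mem_orthogonal_ker _)⟩
  have hNh : N h = 0 := hN.apply_of_mem_ker h (hQ.mem_ker hA hhB hhA)
  have hKb : K b = 0 := hK.apply_eq_zero_of_mem_orthogonal (Submodule.orthogonal_le hAB hb)
  have hKh : K h = 0 := hK.apply_eq_zero_of_mem_orthogonal hhA
  have hLf : L.adjoint f = 0 := hL.adjoint_apply_eq_zero_of_mem_ker (hAB hf)
  have hLh : L.adjoint h = 0 := hL.adjoint_apply_eq_zero_of_mem_ker hhB
  simp [hNf, hNb, hNh, hKb, hKh, hLf, hLh]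

end Laplacian

section Restriction

variable [CompleteSpace E] {T P : E →ₗ.[𝕜] E}

theorem isHodgeLaplacian_of_domain_of_apply
    (hPdom : ∀ x : E, x ∈ P.domain ↔
      ∃ (h1 : x ∈ T.domain) (h2 : x ∈ T†.domain),
        T ⟨x, h1⟩ ∈ T†.domain ∧ T† ⟨x, h2⟩ ∈ T.domain)
    (hPval : ∀ (x : E) (hx : x ∈ P.domain) (h1 : x ∈ T.domain) (h2 : x ∈ T†.domain)
      (h3 : T ⟨x, h1⟩ ∈ T†.domain) (h4 : T† ⟨x, h2⟩ ∈ T.domain),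
      P ⟨x, hx⟩ = T† ⟨T ⟨x, h1⟩, h3⟩ + T ⟨T† ⟨x, h2⟩, h4⟩) :
    IsHodgeLaplacian T T P := by
  intro u f
  constructor
  · intro huf
    have hu := LinearPMap.mem_domain_of_mem_graph huf
    obtain ⟨h1, h2, h3, h4⟩ := (hPdom u).1 hu
    refine ⟨_, _, _, _, T†.mem_graph ⟨u, h2⟩, T.mem_graph ⟨_, h4⟩, T.mem_graph ⟨u, h1⟩,
      T†.mem_graph ⟨_, h3⟩, ?_⟩
    rw [(LinearPMap.image_iff hu).2 huf, hPval u hu h1 h2 h3 h4, add_comm]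
  · rintro ⟨w, a, v, b, hw, ha, hv, hb, rfl⟩
    have h2 := LinearPMap.mem_domain_of_mem_graph hw
    have h4 := LinearPMap.mem_domain_of_mem_graph ha
    have h1 := LinearPMap.mem_domain_of_mem_graph hv
    have h3 := LinearPMap.mem_domain_of_mem_graph hb
    obtain rfl := (LinearPMap.image_iff h2).2 hw
    obtain rfl := (LinearPMap.image_iff h4).2 ha
    obtain rfl := (LinearPMap.image_iff h1).2 hv
    obtain rfl := (LinearPMap.image_iff h3).2 hb
    have hu := (hPdom u).2 ⟨h1, h2, h3, h4⟩
    rw [← LinearPMap.image_iff hu, hPval u hu h1 h2 h3 h4, add_comm]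

theorem IsHodgeLaplacian.restrict {V₁ V₂ V₃ : Submodule 𝕜 E}
    [CompleteSpace V₁] [CompleteSpace V₂]
    {T₁ : V₁ →ₗ.[𝕜] V₂} {T₂ : V₂ →ₗ.[𝕜] V₃} {Q : V₂ →ₗ.[𝕜] V₂}
    (hP : IsHodgeLaplacian T T P)
    (hT₁ : IsRestrictionOf T V₁ V₂ T₁) (hT₂ : IsRestrictionOf T V₂ V₃ T₂)
    (hS₂ : IsRestrictionOf T† V₂ V₁ T₁†) (hS₃ : IsRestrictionOf T† V₃ V₂ T₂†)
    (hQ : IsRestrictionOf P V₂ V₂ Q) : IsHodgeLaplacian T₁ T₂ Q := by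
  intro u f
  rw [hQ.mem_graph_iff, hP]
  constructor
  · rintro ⟨w, a, v, b, hw, ha, hv, hb, hf⟩
    obtain ⟨w, rfl, hw'⟩ := hS₂.exists_mem_graph hw
    obtain ⟨a, rfl, ha'⟩ := hT₁.exists_mem_graph ha
    obtain ⟨v, rfl, hv'⟩ := hT₂.exists_mem_graph hv
    obtain ⟨b, rfl, hb'⟩ := hS₃.exists_mem_graph hb
    exact ⟨w, a, v, b, hw', ha', hv', hb', Subtype.ext hf⟩
  · rintro ⟨w, a, v, b, hw, ha, hv, hb, rfl⟩
    exact ⟨w, a, v, b, hS₂.mem_graph_iff.1 hw, hT₁.mem_graph_iff.1 ha, hT₂.mem_graph_iff.1 hv,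
      hS₃.mem_graph_iff.1 hb, rfl⟩

end Restriction

theorem stmt_11_general [CompleteSpace E] [CompleteSpace F] [CompleteSpace G]
    (hA : Dense (A.domain : Set E)) (hB : Dense (B.domain : Set F))
    (hAB : LinearMap.range A.toFun ≤ partialKer B) (hQ : IsHodgeLaplacian A B Q)
    {N : F →L[𝕜] F} (hN : IsGreenOperator Q N)
    {S : F →L[𝕜] E} (hS : ∀ f ∈ LinearMap.range A.toFun, (S f, f) ∈ A.graph)
    {S' : G →L[𝕜] F} (hS' : ∀ g ∈ LinearMap.range B.toFun, (S' g, g) ∈ B.graph)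
    {p : F →L[𝕜] F}
    (hp : ∀ u, p u ∈ LinearMap.range A.toFun ∧ u - p u ∈ (LinearMap.range A.toFun)ᗮ)
    {p' : G →L[𝕜] G}
    (hp' : ∀ u, p' u ∈ LinearMap.range B.toFun ∧ u - p' u ∈ (LinearMap.range B.toFun)ᗮ)
    {r : E →L[𝕜] E} (hr : ∀ u, r u ∈ (partialKer A)ᗮ ∧ u - r u ∈ partialKer A)
    {r' : F →L[𝕜] F} (hr' : ∀ u, r' u ∈ (partialKer B)ᗮ ∧ u - r' u ∈ partialKer B) :
    N = (r.comp (S.comp p)).adjoint.comp (r.comp (S.comp p)) +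
        (r'.comp (S'.comp p')).comp (r'.comp (S'.comp p')).adjoint ∧
    (IsCompactOperator S → IsCompactOperator S' → IsCompactOperator N) := by
  have hNeq := hN.eq_adjoint_comp_self_add_self_comp_adjoint hA hB hAB hQ
    (isMoorePenroseInverse_comp hS hp hr) (isMoorePenroseInverse_comp hS' hp' hr')
  refine ⟨hNeq, fun hSc hSc' => ?_⟩
  rw [hNeq]
  have hKc : IsCompactOperator (r.comp (S.comp p)) := (hSc.comp_clm p).clm_comp r
  have hLc : IsCompactOperator (r'.comp (S'.comp p')) := (hSc'.comp_clm p').clm_comp r'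
  exact (hKc.clm_comp (r.comp (S.comp p)).adjoint).add
    (hLc.comp_clm (r'.comp (S'.comp p')).adjoint)

end Hilbert

theorem stmt_11 {H : Type*} [NormedAddCommGroup H] [InnerProductSpace ℂ H] [CompleteSpace H]
    -- `T` is closed and densely defined, with range contained in `Dom T` and `T² = 0`
    (T : H →ₗ.[ℂ] H) (hTd : Dense (T.domain : Set H)) (hTc : T.IsClosed)
    (hTr : ∀ u : T.domain, T u ∈ T.domain)
    (hT2 : ∀ u : T.domain, T ⟨T u, hTr u⟩ = 0)
    -- `P = T*T + TT*` with its natural domain; `P` is self-adjoint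
    (P : H →ₗ.[ℂ] H)
    (hPdom : ∀ x : H, x ∈ P.domain ↔
      ∃ (h1 : x ∈ T.domain) (h2 : x ∈ (T†).domain),
        T ⟨x, h1⟩ ∈ (T†).domain ∧ T† ⟨x, h2⟩ ∈ T.domain)
    (hPval : ∀ (x : H) (hx : x ∈ P.domain) (h1 : x ∈ T.domain) (h2 : x ∈ (T†).domain)
      (h3 : T ⟨x, h1⟩ ∈ (T†).domain) (h4 : T† ⟨x, h2⟩ ∈ T.domain),
      P ⟨x, hx⟩ = T† ⟨T ⟨x, h1⟩, h3⟩ + T ⟨T† ⟨x, h2⟩, h4⟩)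
    (hPsa : IsSelfAdjoint P)
    -- the closed subspaces `V₁, V₂, V₃`
    (V₁ V₂ V₃ : Submodule ℂ H)
    (hV₁ : IsClosed (V₁ : Set H)) (hV₂ : IsClosed (V₂ : Set H)) (hV₃ : IsClosed (V₃ : Set H))
    [CompleteSpace V₁] [CompleteSpace V₂] [CompleteSpace V₃]
    -- `T₁ = T|_{V₁} : V₁ ⇀ V₂` and `T₂ = T|_{V₂} : V₂ ⇀ V₃`, densely defined with closed range
    (T₁ : ↥V₁ →ₗ.[ℂ] ↥V₂) (hT₁ : IsRestrictionOf T V₁ V₂ T₁)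
    (hT₁d : Dense (T₁.domain : Set V₁))
    (T₂ : ↥V₂ →ₗ.[ℂ] ↥V₃) (hT₂ : IsRestrictionOf T V₂ V₃ T₂)
    (hT₂d : Dense (T₂.domain : Set V₂))
    (hR₁ : IsClosed ((LinearMap.range T₁.toFun : Submodule ℂ V₂) : Set V₂))
    (hR₂ : IsClosed ((LinearMap.range T₂.toFun : Submodule ℂ V₃) : Set V₃))
    -- `S₂ = T*|_{V₂} : V₂ ⇀ V₁` and `S₃ = T*|_{V₃} : V₃ ⇀ V₂`; the adjoint of `T|_{V₁}` is
    -- `T*|_{V₂}` and the adjoint of `T|_{V₂}` is `T*|_{V₃}`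
    (S₂ : ↥V₂ →ₗ.[ℂ] ↥V₁) (hS₂ : IsRestrictionOf (T†) V₂ V₁ S₂)
    (S₃ : ↥V₃ →ₗ.[ℂ] ↥V₂) (hS₃ : IsRestrictionOf (T†) V₃ V₂ S₃)
    (hadj₁ : T₁† = S₂) (hadj₂ : T₂† = S₃)
    -- `Q = P|_{V₂}`
    (Q : ↥V₂ →ₗ.[ℂ] ↥V₂) (hQ : IsRestrictionOf P V₂ V₂ Q)
    -- `N = Q⁻¹` is the Green operator
    (N : V₂ →L[ℂ] V₂)
    (hN0 : ∀ u ∈ (LinearMap.ker Q.toFun).map Q.domain.subtype, N u = 0)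
    (hNR : ∀ u ∈ LinearMap.range Q.toFun, ∃ h : N u ∈ Q.domain,
      N u ∈ LinearMap.range Q.toFun ∧ Q ⟨N u, h⟩ = u)
    -- `T_q : V₂ → V₁` is a bounded solution operator on `T(Dom T ∩ V₁)`
    (Tq : V₂ →L[ℂ] V₁) (hTqdom : ∀ f : V₂, Tq f ∈ T₁.domain)
    (hTqsol : ∀ f ∈ LinearMap.range T₁.toFun, T₁ ⟨Tq f, hTqdom f⟩ = f)
    -- `T_{q+1} : V₃ → V₂` is a bounded solution operator on `T(Dom T ∩ V₂)`
    (Tq1 : V₃ →L[ℂ] V₂) (hTq1dom : ∀ g : V₃, Tq1 g ∈ T₂.domain)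
    (hTq1sol : ∀ g ∈ LinearMap.range T₂.toFun, T₂ ⟨Tq1 g, hTq1dom g⟩ = g)
    -- `Π₁ : V₂ → V₂` is the orthogonal projection onto `T(Dom T ∩ V₁)`
    (Pi1 : V₂ →L[ℂ] V₂)
    (hPi1 : ∀ u : V₂, Pi1 u ∈ LinearMap.range T₁.toFun ∧
      u - Pi1 u ∈ (LinearMap.range T₁.toFun)ᗮ)
    -- `Π₂ : V₃ → V₃` is the orthogonal projection onto `T(Dom T ∩ V₂)`
    (Pi2 : V₃ →L[ℂ] V₃)
    (hPi2 : ∀ u : V₃, Pi2 u ∈ LinearMap.range T₂.toFun ∧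
      u - Pi2 u ∈ (LinearMap.range T₂.toFun)ᗮ)
    -- `Pr₁ : V₁ → V₁` is the orthogonal projection onto `(ker T ∩ V₁)ᗮ ∩ V₁`
    (Pr1 : V₁ →L[ℂ] V₁)
    (hPr1 : ∀ u : V₁, Pr1 u ∈ ((LinearMap.ker T₁.toFun).map T₁.domain.subtype)ᗮ ∧
      u - Pr1 u ∈ (LinearMap.ker T₁.toFun).map T₁.domain.subtype)
    -- `Pr₂ : V₂ → V₂` is the orthogonal projection onto `(ker T ∩ V₂)ᗮ ∩ V₂`
    (Pr2 : V₂ →L[ℂ] V₂)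
    (hPr2 : ∀ u : V₂, Pr2 u ∈ ((LinearMap.ker T₂.toFun).map T₂.domain.subtype)ᗮ ∧
      u - Pr2 u ∈ (LinearMap.ker T₂.toFun).map T₂.domain.subtype) :
    -- with `K_q = Pr₁ ∘ T_q ∘ Π₁` and `K_{q+1} = Pr₂ ∘ T_{q+1} ∘ Π₂` one has
    -- `N = K_q* K_q + K_{q+1} K_{q+1}*`; if `T_q, T_{q+1}` are compact then `N` is compact
    N = (ContinuousLinearMap.adjoint (Pr1.comp (Tq.comp Pi1))).comp (Pr1.comp (Tq.comp Pi1)) +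
        (Pr2.comp (Tq1.comp Pi2)).comp
          (ContinuousLinearMap.adjoint (Pr2.comp (Tq1.comp Pi2))) ∧
    (IsCompactOperator (⇑Tq : V₂ → V₁) → IsCompactOperator (⇑Tq1 : V₃ → V₂) →
      IsCompactOperator (⇑N : V₂ → V₂)) := by
  subst hadj₁ hadj₂
  have hTT : LinearMap.range T.toFun ≤ partialKer T := by
    rintro _ ⟨u, rfl⟩
    exact ⟨⟨T u, hTr u⟩, hT2 u, rfl⟩
  have hQL : IsHodgeLaplacian T₁ T₂ Q :=
    (isHodgeLaplacian_of_domain_of_apply hPdom hPval).restrict hT₁ hT₂ hS₂ hS₃ hQ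
  have hN : IsGreenOperator Q N :=
    ⟨hN0, fun u hu => let ⟨h, _, he⟩ := hNR u hu; (LinearPMap.image_iff h).1 he.symm,
      fun u hu => let ⟨_, hr, _⟩ := hNR u hu; hr⟩
  exact stmt_11_general hT₁d hT₂d (hT₁.range_le_partialKer hT₂ hTT) hQL hN
    (fun f hf => (LinearPMap.image_iff _).1 (hTqsol f hf).symm)
    (fun g hg => (LinearPMap.image_iff _).1 (hTq1sol g hg).symm) hPi1 hPi2 hPr1 hPr2
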